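/- arXiv:1001.4292 — 2 statements merged into one kernel-verified Lean document; each statement's English description precedes it below -/
import Mathlib

section
/- Let V be a real inner product space, let J and J' be orthogonal complex structures on V, and let x be a real number with x² < 1 such that J' ∘ J + J ∘ J' = -2x • id. Then I := (1 - x²)^(-1/2) • (J' - x J) is an orthogonal complex structure on V that anticommutes with J (i.e. I ∘ J = -(J ∘ I)), and J' = x J + √(1 - x²) I. -/
open RealInnerProductSpace

/-- If `J`, `J'` are orthogonal complex structures with
`J' ∘ J + J ∘ J' = -2x • id` and `x² < 1`, then
`I := (1 - x²)^(-1/2) • (J' - x J)` is an orthogonal complex structure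
anticommuting with `J`, and `J' = x J + √(1 - x²) I`. -/
theorem stmt_9 {V : Type*} [NormedAddCommGroup V] [InnerProductSpace ℝ V]
    (J J' : V →ₗ[ℝ] V)
    (hJ2 : J ∘ₗ J = -LinearMap.id) (hJo : ∀ v w : V, ⟪J v, J w⟫ = ⟪v, w⟫)
    (hJ'2 : J' ∘ₗ J' = -LinearMap.id) (hJ'o : ∀ v w : V, ⟪J' v, J' w⟫ = ⟪v, w⟫)
    (x : ℝ) (hx : x ^ 2 < 1)
    (hcomm : J' ∘ₗ J + J ∘ₗ J' = -((2 * x) • LinearMap.id)) :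
    let I : V →ₗ[ℝ] V := ((1 - x ^ 2) ^ (-(1 / 2 : ℝ))) • (J' - x • J)
    (I ∘ₗ I = -LinearMap.id) ∧
    (∀ v w : V, ⟪I v, I w⟫ = ⟪v, w⟫) ∧
    (I ∘ₗ J = -(J ∘ₗ I)) ∧
    J' = x • J + (Real.sqrt (1 - x ^ 2)) • I := by
  intro I
  have hpos : 0 < 1 - x ^ 2 := by linarith
  obtain ⟨c, hc⟩ : ∃ c : ℝ, c = (1 - x ^ 2) ^ (-(1 / 2 : ℝ)) := ⟨_, rfl⟩
  have hsc : Real.sqrt (1 - x ^ 2) * c = 1 := by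
    rw [hc, Real.sqrt_eq_rpow, ← Real.rpow_add hpos]
    norm_num
  have hcc : c * c * (1 - x ^ 2) = 1 := by
    have h := Real.mul_self_sqrt hpos.le
    calc c * c * (1 - x ^ 2) = (Real.sqrt (1 - x ^ 2) * c) * (Real.sqrt (1 - x ^ 2) * c) := by
          rw [← h, Real.sqrt_mul_self (Real.sqrt_nonneg _)]; ring
      _ = 1 := by rw [hsc]; ring
  have hI : ∀ v, I v = c • (J' v - x • J v) := by
    intro v
    simp [I, hc]
  have h1 : ∀ v, J (J v) = -v := fun v => by simpa using LinearMap.congr_fun hJ2 v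
  have h2 : ∀ v, J' (J' v) = -v := fun v => by simpa using LinearMap.congr_fun hJ'2 v
  have h3 : ∀ v, J' (J v) = -((2 * x) • v) - J (J' v) := fun v => by
    have := LinearMap.congr_fun hcomm v
    simp only [LinearMap.add_apply, LinearMap.comp_apply, LinearMap.neg_apply,
      LinearMap.smul_apply, LinearMap.id_apply] at this
    rw [← this]; abel
  refine ⟨?_, ?_, ?_, ?_⟩
  · ext v
    simp only [LinearMap.comp_apply, LinearMap.neg_apply, LinearMap.id_apply, hI, map_smul,
      map_sub, h1, h2, h3]
    have : -v = (c * c * (1 - x ^ 2)) • (-v) := by rw [hcc, one_smul]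
    refine Eq.trans ?_ this.symm
    module
  · intro v w
    have e1 : ⟪J' v, J w⟫ = -⟪v, J' (J w)⟫ := by
      rw [← hJ'o (J' v) (J w), h2, inner_neg_left]
    have e2 : ⟪J v, J' w⟫ = -⟪v, J (J' w)⟫ := by
      rw [← hJo (J v) (J' w), h1, inner_neg_left]
    rw [h3] at e1
    simp only [inner_sub_right, inner_neg_right, inner_smul_right] at e1
    simp only [hI, inner_smul_left, inner_smul_right, inner_sub_left, inner_sub_right, hJo, hJ'o,
      e1, e2, conj_trivial]
    linear_combination ⟪v, w⟫ * hcc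
  · ext v
    simp only [LinearMap.comp_apply, LinearMap.neg_apply, hI, map_smul,
      map_sub, h1, h3]
    module
  · ext v
    simp only [LinearMap.add_apply, LinearMap.smul_apply, hI, smul_smul, hsc, one_smul]
    abel
end

section
/- Let V be a real inner product space, let J and J' be orthogonal complex structures on V, and let x be a real number with x² = 1 such that J' ∘ J + J ∘ J' = -2x • id. Then J' = x J; in particular J' = J or J' = -J. -/
open RealInnerProductSpace

/-- If `J`, `J'` are orthogonal complex structures with
`J' ∘ J + J ∘ J' = -2x • id` and `x² = 1`, then `J' = x J`; in particular
`J' = J` or `J' = -J`. -/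
theorem stmt_10 {V : Type*} [NormedAddCommGroup V] [InnerProductSpace ℝ V]
    (J J' : V →ₗ[ℝ] V)
    (hJ2 : J ∘ₗ J = -LinearMap.id) (hJo : ∀ v w : V, ⟪J v, J w⟫ = ⟪v, w⟫)
    (hJ'2 : J' ∘ₗ J' = -LinearMap.id) (hJ'o : ∀ v w : V, ⟪J' v, J' w⟫ = ⟪v, w⟫)
    (x : ℝ) (hx : x ^ 2 = 1)
    (hcomm : J' ∘ₗ J + J ∘ₗ J' = -((2 * x) • LinearMap.id)) :
    J' = x • J ∧ (J' = J ∨ J' = -J) := by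
  have h1 : ∀ v, J (J v) = -v := fun v => by simpa using LinearMap.congr_fun hJ2 v
  have h2 : ∀ v, J' (J' v) = -v := fun v => by simpa using LinearMap.congr_fun hJ'2 v
  have h3 : ∀ v, J' (J v) + J (J' v) = -((2 * x) • v) := fun v => by
    simpa using LinearMap.congr_fun hcomm v
  have main : J' = x • J := by
    ext v
    rw [LinearMap.smul_apply, ← sub_eq_zero, ← inner_self_eq_zero (𝕜 := ℝ)]
    have a := hJ'o v (J v)
    have b : ⟪J (J' v), J (J v)⟫ = ⟪J' v, J v⟫ := hJo (J' v) (J v)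
    have a' : ⟪J' (J' v), J' (J v)⟫ = ⟪J' v, J v⟫ := hJ'o (J' v) (J v)
    rw [h1, inner_neg_right, real_inner_comm] at b
    rw [h2, inner_neg_left] at a'
    have c : ⟪v, J' (J v) + J (J' v)⟫ = ⟪v, -((2 * x) • v)⟫ := by rw [h3]
    rw [inner_add_right, inner_neg_right, real_inner_smul_right] at c
    have d := hJo v v
    have e := hJ'o v v
    have f := real_inner_comm (J' v) (J v)
    simp only [inner_sub_left, inner_sub_right, real_inner_smul_left, real_inner_smul_right]
    have g : ⟪J' v, J v⟫ = x * ⟪v, v⟫ := by linarith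
    rw [d, e, f, g]
    linear_combination (-⟪v, v⟫) * hx
  refine ⟨main, ?_⟩
  rcases (by simpa using hx : x = 1 ∨ x = -1) with h | h
  · left; rw [main, h, one_smul]
  · right; rw [main, h, neg_one_smul]
end
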